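/- The integer b is odd (in the writing ε = a + b√m of the fundamental unit, the case b even does not occur). -/

import Mathlib

theorem jac_prod {ι : Type*} [DecidableEq ι] (A : Finset ι) (f : ι → ℕ) (p : ℕ) :
    jacobiSym ((∏ i ∈ A, f i : ℕ) : ℤ) p = ∏ i ∈ A, jacobiSym (f i : ℤ) p := by
  induction A using Finset.induction_on with
  | empty => simp
  | insert i s hi ih =>
    rw [Finset.prod_insert hi, Finset.prod_insert hi, Nat.cast_mul, jacobiSym.mul_left, ih]

theorem jac_one_of (D X : ℤ) (p : ℕ) (h : (p : ℤ) ∣ D * X ^ 2 - 1) : jacobiSym D p = 1 := by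
  have h1 : jacobiSym (D * X ^ 2) p = jacobiSym 1 p := by
    apply jacobiSym.mod_left'
    exact (Int.emod_eq_emod_iff_emod_sub_eq_zero.mpr
      (Int.emod_eq_zero_of_dvd h))
  rw [jacobiSym.mul_left, jacobiSym.one_left, pow_two, jacobiSym.mul_left] at h1
  rcases jacobiSym.trichotomy X p with h2 | h2 | h2 <;> rw [h2] at h1 <;> simpa using h1

/-- **Deng–Li family: `b` is odd.** In the writing `ε = a + b√m` of the fundamental unit
(with `(a, b)` the fundamental solution of `a² − m b² = 1`), the case `b` even does not
occur. -/
theorem dengLi_b_odd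
    (n : ℕ) (hn : 2 ≤ n) (hneven : Even n)
    (l : Fin n → ℕ) (hlp : ∀ i, (l i).Prime) (hlinj : Function.Injective l)
    (hl1 : l ⟨0, by omega⟩ % 8 = 3)
    (hli : ∀ i : Fin n, i ≠ ⟨0, by omega⟩ → l i % 8 = 5)
    (hleg12 : jacobiSym (l ⟨0, by omega⟩ : ℤ) (l ⟨1, by omega⟩) = -1)
    (hleg1j : ∀ j : Fin n, 2 ≤ (j : ℕ) → jacobiSym (l ⟨0, by omega⟩ : ℤ) (l j) = 1)
    (hlegij : ∀ i j : Fin n, 1 ≤ (i : ℕ) → i < j → jacobiSym (l i : ℤ) (l j) = -1)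
    (m : ℕ) (hm : m = ∏ i, l i)
    (a b : ℕ) (ha : 0 < a) (hb : 0 < b) (hpell : a ^ 2 = m * b ^ 2 + 1)
    (hmin : ∀ a' b' : ℕ, 0 < a' → 0 < b' → a' ^ 2 = m * b' ^ 2 + 1 → a ≤ a') :
    Odd b := by
  classical
  by_contra hodd
  rw [Nat.not_odd_iff_even] at hodd
  obtain ⟨c, hc⟩ := hodd
  have hc' : b = 2 * c := by omega
  subst hc'
  clear hc
  have haodd : Odd a := by
    rcases Nat.even_or_odd a with h | h
    · obtain ⟨k, hk⟩ := h
      exfalso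
      subst hk
      have : 2 * (2 * k ^ 2) = 2 * (2 * (m * c ^ 2)) + 1 := by linarith [hpell]
      omega
    · exact h
  obtain ⟨u, rfl⟩ := haodd
  have hu : (u + 1) * u = m * c ^ 2 := by nlinarith [hpell]
  have hcpos : 0 < c := by omega
  have hcop : Nat.Coprime (u + 1) u := by simp
  set z : Fin n := ⟨0, by omega⟩ with hz
  set w : Fin n := ⟨1, by omega⟩ with hw
  have hwz : w ≠ z := by simp [hz, hw]
  set S : Finset (Fin n) := Finset.univ.filter (fun i => l i ∣ u + 1) with hS
  set T : Finset (Fin n) := Finset.univ.filter (fun i => ¬ l i ∣ u + 1) with hT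
  have memS : ∀ i, i ∈ S ↔ l i ∣ u + 1 := fun i => by simp [hS]
  have memT : ∀ i, i ∈ T ↔ ¬ l i ∣ u + 1 := fun i => by simp [hT]
  have memST : ∀ i, i ∈ T ↔ i ∉ S := fun i => by rw [memT, memS]
  have hTu : ∀ i ∈ T, l i ∣ u := by
    intro i hi
    have h1 : l i ∣ (u + 1) * u := by
      rw [hu, hm]
      exact (Finset.dvd_prod_of_mem l (Finset.mem_univ i)).mul_right _
    exact ((hlp i).dvd_mul.mp h1).resolve_left ((memT i).mp hi)
  have hcard : S.card + T.card = n := by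
    have := Finset.card_filter_add_card_filter_not (s := (Finset.univ : Finset (Fin n)))
      (fun i => l i ∣ u + 1)
    simpa [hS, hT] using this
  obtain ⟨d, hd⟩ : ∃ d, d = ∏ i ∈ S, l i := ⟨_, rfl⟩
  obtain ⟨e, he⟩ : ∃ e, e = ∏ i ∈ T, l i := ⟨_, rfl⟩
  have hde : d * e = m := by
    rw [hd, he, hm, hS, hT]
    exact Finset.prod_filter_mul_prod_filter_not _ _ _
  have hpc' : ∀ i j, i ≠ j → Nat.Coprime (l i) (l j) := fun i j hij =>
    (Nat.coprime_primes (hlp i) (hlp j)).mpr (fun h => hij (hlinj h))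
  have hdu : d ∣ u + 1 := by
    rw [hd]
    exact Finset.prod_dvd_of_isRelPrime
      (fun i _ j _ hij => Nat.coprime_iff_isRelPrime.mp (hpc' i j hij)) (fun i hi => (memS i).mp hi)
  have heu : e ∣ u := by
    rw [he]
    exact Finset.prod_dvd_of_isRelPrime
      (fun i _ j _ hij => Nat.coprime_iff_isRelPrime.mp (hpc' i j hij)) (fun i hi => hTu i hi)
  have hmpos : 0 < m := by
    rw [hm]; exact Finset.prod_pos (fun i _ => (hlp i).pos)
  obtain ⟨U, hU⟩ := hdu
  obtain ⟨V, hV⟩ := heu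
  have hUV : U * V = c ^ 2 := by
    apply Nat.eq_of_mul_eq_mul_left hmpos
    rw [← hu, ← hde, hU]
    conv_rhs => rw [hV]
    ring
  have hUVc : Nat.Coprime U V :=
    Nat.Coprime.coprime_dvd_left (Dvd.intro_left d hU.symm)
      (Nat.Coprime.coprime_dvd_right (Dvd.intro_left e hV.symm) hcop)
  obtain ⟨x, hx⟩ := exists_eq_pow_of_mul_eq_pow (Nat.isUnit_iff.mpr hUVc) hUV
  obtain ⟨y, hy⟩ := exists_eq_pow_of_mul_eq_pow (Nat.isUnit_iff.mpr hUVc.symm) (c := c) (k := 2) (by rw [mul_comm]; exact hUV)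
  have hupos : 0 < u := by
    rcases Nat.eq_zero_or_pos u with h | h
    · have : 0 < m * c ^ 2 := by positivity
      rw [← hu, h] at this
      simp at this
    · exact h
  have hmain : (d : ℤ) * x ^ 2 - e * y ^ 2 = 1 := by
    have h1 : ((u : ℤ) + 1) = d * x ^ 2 := by rw [hx] at hU; exact_mod_cast hU
    have h2 : (u : ℤ) = e * y ^ 2 := by rw [hy] at hV; exact_mod_cast hV
    rw [← h1]; linarith
  -- the case d = 1
  have hd1 : S ≠ ∅ := by
    intro hS0
    have hd1 : d = 1 := by rw [hd, hS0]; simp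
    have hem : e = m := by rw [← hde, hd1, one_mul]
    have hx2 : x ^ 2 = m * y ^ 2 + 1 := by
      rw [← hx, ← hy, ← hem, ← hV, hU, hd1, one_mul]
    have hxu : x ^ 2 = u + 1 := by rw [← hx, hU, hd1, one_mul]
    have hxpos : 0 < x := by
      rcases Nat.eq_zero_or_pos x with h | h
      · rw [h] at hx2; simp at hx2
      · exact h
    have hypos : 0 < y := by
      rcases Nat.eq_zero_or_pos y with h | h
      · rw [hV, hy, h] at hupos; simp at hupos
      · exact h
    have := hmin x y hxpos hypos hx2
    nlinarith
  have hJT : ∀ j ∈ T, jacobiSym (d : ℤ) (l j) = 1 := by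
    intro j hj
    apply jac_one_of _ x
    have h1 : (l j : ℤ) ∣ e := by
      rw [he]; exact_mod_cast Finset.dvd_prod_of_mem l hj
    have h2 : (d : ℤ) * x ^ 2 - 1 = e * y ^ 2 := by linarith
    rw [h2]; exact h1.mul_right _
  have hJS : ∀ j ∈ S, jacobiSym (-1) (l j) * jacobiSym (e : ℤ) (l j) = 1 := by
    intro j hj
    rw [← jacobiSym.mul_left]
    apply jac_one_of _ y
    have h1 : (l j : ℤ) ∣ d := by
      rw [hd]; exact_mod_cast Finset.dvd_prod_of_mem l hj
    have h2 : (-1 * e : ℤ) * y ^ 2 - 1 = d * (-x ^ 2) := by linarith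
    rw [h2]; exact h1.mul_right _
  have hneg : ∀ j, j ≠ z → jacobiSym (-1) (l j) = 1 := by
    intro j hj
    have h5 := hli j hj
    rw [jacobiSym.at_neg_one (Nat.odd_iff.mpr (by omega)), ZMod.χ₄_nat_one_mod_four (by omega)]
  have hneg0 : jacobiSym (-1) (l z) = -1 := by
    rw [jacobiSym.at_neg_one (Nat.odd_iff.mpr (by omega)), ZMod.χ₄_nat_three_mod_four (by omega)]
  have hge1 : ∀ j : Fin n, j ≠ z → 1 ≤ (j : ℕ) := by
    intro j hj
    have : (j : ℕ) ≠ 0 := fun h => hj (Fin.ext h)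
    omega
  have hge2 : ∀ j : Fin n, j ≠ z → j ≠ w → 2 ≤ (j : ℕ) := by
    intro j hj hj'
    have := hge1 j hj
    have : (j : ℕ) ≠ 1 := fun h => hj' (Fin.ext h)
    omega
  have hsymm : ∀ i j, j ≠ z → jacobiSym (l j : ℤ) (l i) = jacobiSym (l i : ℤ) (l j) := by
    intro i j hj
    have h5 := hli j hj
    have hodd : Odd (l i) := by
      by_cases hi : i = z
      · rw [hi]; exact Nat.odd_iff.mpr (by omega)
      · have := hli i hi; exact Nat.odd_iff.mpr (by omega)
    exact jacobiSym.quadratic_reciprocity_one_mod_four (by omega) hodd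
  have hij : ∀ i j, i ≠ z → j ≠ z → i ≠ j → jacobiSym (l i : ℤ) (l j) = -1 := by
    intro i j hi hj hne
    rcases lt_or_gt_of_ne hne with h | h
    · exact hlegij i j (hge1 i hi) h
    · rw [hsymm j i hi]; exact hlegij j i (hge1 j hj) h
  have hprod : ∀ (A : Finset (Fin n)) (j : Fin n), j ≠ z → j ∉ A →
      jacobiSym ((∏ i ∈ A, l i : ℕ) : ℤ) (l j) =
        (if z ∈ A then - jacobiSym (l z : ℤ) (l j) else 1) * (-1) ^ A.card := by
    intro A j hj hjA
    rw [jac_prod]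
    have : ∀ i ∈ A, jacobiSym (l i : ℤ) (l j) =
        (if z = i then - jacobiSym (l z : ℤ) (l j) else 1) * (-1) := by
      intro i hi
      by_cases h : z = i
      · rw [if_pos h, ← h]; ring
      · rw [if_neg h, hij i j (Ne.symm h) hj (fun hh => hjA (hh ▸ hi))]; ring
    rw [Finset.prod_congr rfl this, Finset.prod_mul_distrib, Finset.prod_ite_eq, Finset.prod_const]
  have hprod0 : ∀ (A : Finset (Fin n)), z ∉ A →
      jacobiSym ((∏ i ∈ A, l i : ℕ) : ℤ) (l z) = if w ∈ A then -1 else 1 := by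
    intro A hzA
    rw [jac_prod]
    have : ∀ i ∈ A, jacobiSym (l i : ℤ) (l z) = if w = i then -1 else 1 := by
      intro i hi
      have hiz : i ≠ z := fun h => hzA (h ▸ hi)
      rw [hsymm z i hiz]
      by_cases h : w = i
      · rw [if_pos h, ← h]; exact hleg12
      · rw [if_neg h]; exact hleg1j i (hge2 i hiz (Ne.symm h))
    rw [Finset.prod_congr rfl this, Finset.prod_ite_eq]
  by_cases hzS : z ∈ S
  · have hzT : z ∉ T := fun h => (memST z).mp h hzS
    have h0 := hJS z hzS
    rw [hneg0, he, hprod0 T hzT] at h0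
    have hwT : w ∈ T := by
      by_contra h
      rw [if_neg h] at h0
      norm_num at h0
    have hw1 := hJT w hwT
    rw [hd, hprod S w hwz ((memST w).mp hwT), if_pos hzS, hleg12, neg_neg, one_mul] at hw1
    have hSeven : Even S.card := by
      rcases Nat.even_or_odd S.card with h | h
      · exact h
      · rw [h.neg_one_pow] at hw1; norm_num at hw1
    have hTw : T = {w} := by
      apply Finset.eq_singleton_iff_unique_mem.mpr ⟨hwT, ?_⟩
      intro j hj
      by_contra hjw
      have hjz : j ≠ z := fun h => hzT (h ▸ hj)
      have h1 := hJT j hj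
      rw [hd, hprod S j hjz ((memST j).mp hj), if_pos hzS, hleg1j j (hge2 j hjz hjw),
        hSeven.neg_one_pow] at h1
      norm_num at h1
    rw [hTw, Finset.card_singleton] at hcard
    rw [← hcard] at hneven
    rcases hneven with ⟨k, hk⟩
    rcases hSeven with ⟨k', hk'⟩
    omega
  · have hzT : z ∈ T := (memST z).mpr hzS
    have h0 := hJT z hzT
    rw [hd, hprod0 S hzS] at h0
    have hwS : w ∉ S := by
      intro h
      rw [if_pos h] at h0
      norm_num at h0
    have hwT : w ∈ T := (memST w).mpr hwS
    have hw1 := hJT w hwT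
    rw [hd, hprod S w hwz hwS, if_neg hzS, one_mul] at hw1
    have hSeven : Even S.card := by
      rcases Nat.even_or_odd S.card with h | h
      · exact h
      · rw [h.neg_one_pow] at hw1; norm_num at hw1
    have hTeven : Even T.card := by
      rcases hneven with ⟨k, hk⟩
      rcases hSeven with ⟨k', hk'⟩
      exact ⟨k - k', by omega⟩
    obtain ⟨j, hj⟩ := Finset.nonempty_iff_ne_empty.mpr hd1
    have hjz : j ≠ z := fun h => hzS (h ▸ hj)
    have hjw : j ≠ w := fun h => hwS (h ▸ hj)
    have h1 := hJS j hj
    rw [hneg j hjz, he, hprod T j hjz (fun h => (memST j).mp h hj), if_pos hzT,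
      hleg1j j (hge2 j hjz hjw), hTeven.neg_one_pow] at h1
    norm_num at h1
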